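/- Let p ∈ (0,1), n ≥ 4 an integer, and ε a real with 1/√n ≤ ε ≤ min{p/2, 1-p}. Then P[B(n,p) ≤ (p - ε)n] ≥ (1/(2√2))·exp(-nε²/(2p(1-p)) - 3√(nε²)/(2p(1-p)) - 4nε³/(p²(1-p)²)), where B(n,p) denotes a binomial random variable with parameters n and p. -/

import Mathlib

/-- `P[B(n,p) ≤ (p-ε)n]`, the lower tail of a binomial random variable with
parameters `n` and `p`, written as an explicit sum. -/
noncomputable def binomialLowerTail (n : ℕ) (p t : ℝ) : ℝ :=
  ∑ i ∈ Finset.range (n + 1),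
    if (i : ℝ) ≤ t then (n.choose i : ℝ) * p ^ i * (1 - p) ^ (n - i) else 0

open Real

lemma log_one_sub_le {u : ℝ} (h0 : 0 ≤ u) (h1 : u < 1) :
    log (1 - u) ≤ -u - u ^ 2 / 2 := by
  have hs := hasSum_pow_div_log_of_abs_lt_one (x := u) (by rwa [abs_of_nonneg h0])
  have := sum_le_hasSum (Finset.range 2) (fun i _ => by positivity) hs
  norm_num [Finset.sum_range_succ] at this
  linarith

lemma one_add_mul_log_one_add_le {v : ℝ} (h0 : 0 ≤ v) :
    (1 + v) * log (1 + v) ≤ v + v ^ 2 / 2 := by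
  have h := self_le_sinh_iff.2 (log_nonneg (by linarith : (1 : ℝ) ≤ 1 + v))
  rw [sinh_log (by linarith)] at h
  calc (1 + v) * log (1 + v) ≤ (1 + v) * (((1 + v) - (1 + v)⁻¹) / 2) := by gcongr
    _ = v + v ^ 2 / 2 := by field_simp; ring

lemma factorial_le_exp_one_mul_sqrt {k : ℕ} (hk : 1 ≤ k) :
    (k.factorial : ℝ) ≤ exp 1 * √k * (k / exp 1) ^ k := by
  obtain ⟨m, rfl⟩ : ∃ m, k = m + 1 := ⟨k - 1, by omega⟩
  have h := Stirling.stirlingSeq'_antitone (Nat.zero_le m)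
  simp only [Function.comp, Nat.succ_eq_add_one, Nat.zero_add, Stirling.stirlingSeq_one] at h
  rw [Stirling.stirlingSeq] at h
  have hm : (0 : ℝ) < ((m + 1 : ℕ) : ℝ) := by positivity
  rw [div_le_iff₀ (by positivity), sqrt_mul (by norm_num)] at h
  calc _ ≤ _ := h
    _ = _ := by field_simp

/-- A Stirling-type lower bound on the binomial coefficients. -/
lemma choose_lower_bound {n i : ℕ} (hi : 1 ≤ i) (hin : i < n) :
    2 * √(2 * π) / (exp 1 ^ 2 * √n) * ((n / i : ℝ) ^ i * (n / (n - i : ℕ) : ℝ) ^ (n - i))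
      ≤ n.choose i := by
  obtain ⟨j, rfl⟩ : ∃ j, n = i + j := ⟨n - i, by omega⟩
  have hj : 1 ≤ j := by omega
  have hi' : (0 : ℝ) < i := by exact_mod_cast hi
  have hj' : (0 : ℝ) < j := by exact_mod_cast hj
  rw [Nat.add_sub_cancel_left, Nat.cast_add_choose, le_div_iff₀ (by positivity)]
  have hsq : 2 * (√i * √j) ≤ √(i + j : ℕ) * √(i + j : ℕ) := by
    rw [mul_self_sqrt (by positivity)]
    push_cast
    nlinarith [sq_nonneg (√i - √j), sq_sqrt hi'.le, sq_sqrt hj'.le]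
  have hn' : (0 : ℝ) < (i + j : ℕ) := by positivity
  have hs : 0 < √(i + j : ℕ) := sqrt_pos.2 hn'
  refine le_trans ?_ (Stirling.le_factorial_stirling (i + j))
  rw [sqrt_mul (by positivity) (((i + j : ℕ) : ℝ))]
  generalize ((i + j : ℕ) : ℝ) = N at *
  calc _ ≤ 2 * √(2 * π) / (exp 1 ^ 2 * √N) * ((N / i : ℝ) ^ i * (N / j : ℝ) ^ j) *
        ((exp 1 * √i * (i / exp 1) ^ i) * (exp 1 * √j * (j / exp 1) ^ j)) := by
        gcongr
        · exact factorial_le_exp_one_mul_sqrt hi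
        · exact factorial_le_exp_one_mul_sqrt hj
    _ = √(2 * π) * (2 * (√i * √j)) / √N * (N / exp 1) ^ (i + j) := by
        rw [pow_add]
        simp only [div_pow]
        field_simp
    _ ≤ √(2 * π) * (√N * √N) / √N * (N / exp 1) ^ (i + j) := by gcongr
    _ = _ := by field_simp

/-- The probability of a binomial variable taking the value `i ≤ pn` decays at most like
`exp (-n h² / (2p(1-p)) - n h³ / (2p²))` with `h = p - i/n`. -/
lemma binomial_prob_lower_bound {n i : ℕ} {p : ℝ} (hp0 : 0 < p) (hp1 : p < 1) (hi : 1 ≤ i)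
    (hin : i < n) {h : ℝ} (h0 : 0 ≤ h) (hh : (i : ℝ) = (p - h) * n) :
    2 * √(2 * π) / (exp 1 ^ 2 * √n) * exp (-(n * (h ^ 2 / (2 * p * (1 - p)) + h ^ 3 / (2 * p ^ 2))))
      ≤ n.choose i * p ^ i * (1 - p) ^ (n - i) := by
  have hq : 0 < 1 - p := by linarith
  have hi' : (0 : ℝ) < i := by exact_mod_cast hi
  have hn' : (0 : ℝ) < n := by exact_mod_cast (by omega : 0 < n)
  have hsub : ((n - i : ℕ) : ℝ) = n * (1 - p) * (1 + h / (1 - p)) := by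
    rw [Nat.cast_sub hin.le, hh]; field_simp; ring
  have hii : (i : ℝ) = n * p * (1 - h / p) := by rw [hh]; field_simp
  have hj' : (0 : ℝ) < (n - i : ℕ) := by exact_mod_cast (by omega : 0 < n - i)
  have hu1 : 0 < 1 - h / p := by
    by_contra hc
    have := mul_nonpos_of_nonneg_of_nonpos (by positivity : 0 ≤ (n : ℝ) * p) (not_lt.1 hc)
    linarith
  have hu0 : 0 ≤ h / p := by positivity
  have hv0 : 0 ≤ h / (1 - p) := by positivity
  have hv1 : 0 < 1 + h / (1 - p) := by positivity
  have hA : (n / i : ℝ) ^ i * p ^ i = exp (-(i * log (1 - h / p))) := by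
    rw [← mul_pow, ← mul_neg, exp_nat_mul, exp_neg, exp_log hu1]
    congr 1
    rw [hii]; field_simp
  have hB : (n / (n - i : ℕ) : ℝ) ^ (n - i) * (1 - p) ^ (n - i) =
      exp (-((n - i : ℕ) * log (1 + h / (1 - p)))) := by
    rw [← mul_pow, ← mul_neg, exp_nat_mul, exp_neg, exp_log hv1]
    congr 1
    rw [hsub]; field_simp
  have hlogA := mul_le_mul_of_nonneg_left (log_one_sub_le hu0 (by linarith)) hi'.le
  have hlogB := mul_le_mul_of_nonneg_left (one_add_mul_log_one_add_le hv0)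
    (by positivity : 0 ≤ n * (1 - p))
  calc _ ≤ 2 * √(2 * π) / (exp 1 ^ 2 * √n) * (exp (-(i * log (1 - h / p))) *
        exp (-((n - i : ℕ) * log (1 + h / (1 - p))))) := by
        rw [← exp_add]
        gcongr
        have e : n * (h ^ 2 / (2 * p * (1 - p)) + h ^ 3 / (2 * p ^ 2)) =
            i * (-(h / p) - (h / p) ^ 2 / 2) +
              n * (1 - p) * (h / (1 - p) + (h / (1 - p)) ^ 2 / 2) := by
          rw [hh]; field_simp; ring
        rw [e, hsub]
        linarith
    _ = 2 * √(2 * π) / (exp 1 ^ 2 * √n) *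
        ((n / i : ℝ) ^ i * (n / (n - i : ℕ) : ℝ) ^ (n - i)) * p ^ i * (1 - p) ^ (n - i) := by
        rw [← hA, ← hB]; ring
    _ ≤ _ := by
        gcongr
        exact choose_lower_bound hi hin

lemma inv_two_mul_sqrt_two_le : 1 / (2 * √2) ≤ 2 / 3 * (2 * (√2 * √π) / exp 1 ^ 2) := by
  have he : exp 1 ^ 2 ≤ 8 := by
    exact (pow_le_pow_left₀ (exp_pos 1).le exp_one_lt_d9.le 2).trans (by norm_num)
  have hpi : 3 / 2 ≤ √π := by
    apply le_sqrt_of_sq_le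
    linarith [pi_gt_three]
  have h22 : √(2 : ℝ) ^ 2 = 2 := sq_sqrt (by norm_num)
  calc 1 / (2 * √2) = 2 / 3 * (2 * (√2 * (3 / 2)) / 8) := by
        field_simp
        linarith
    _ ≤ _ := by gcongr

theorem stmt_16 (p : ℝ) (hp0 : 0 < p) (hp1 : p < 1) (n : ℕ) (hn : 4 ≤ n)
    (ε : ℝ) (hε1 : 1 / Real.sqrt n ≤ ε) (hε2 : ε ≤ min (p / 2) (1 - p)) :
    binomialLowerTail n p ((p - ε) * n) ≥
      1 / (2 * Real.sqrt 2) *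
        Real.exp (-(n * ε ^ 2) / (2 * p * (1 - p)) -
          3 * Real.sqrt (n * ε ^ 2) / (2 * p * (1 - p)) -
          4 * n * ε ^ 3 / (p ^ 2 * (1 - p) ^ 2)) := by
  obtain ⟨hεp, hεq⟩ := le_min_iff.1 hε2
  have hq : 0 < 1 - p := by linarith
  have hn' : (0 : ℝ) < n := by exact_mod_cast (by omega : 0 < n)
  have hs : 0 < √(n : ℝ) := sqrt_pos.2 hn'
  have hε : 0 < ε := lt_of_lt_of_le (by positivity) hε1
  have hss : √(n : ℝ) * √(n : ℝ) = n := mul_self_sqrt hn'.le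
  have hx : 1 ≤ √(n : ℝ) * ε := by rwa [div_le_iff₀' hs] at hε1
  have hs3 : 3 ≤ √(n : ℝ) := by nlinarith
  have hsqrt : √(n * ε ^ 2) = √n * ε := by rw [sqrt_mul hn'.le, sqrt_sq hε.le]
  rw [hsqrt]
  set s := √(n : ℝ) with hs_def
  set t := (p - ε) * n with ht_def
  have hts : s ≤ t := by
    rw [ht_def, ← hss]; nlinarith
  set E := exp (-(n * ε ^ 2) / (2 * p * (1 - p)) - 3 * (s * ε) / (2 * p * (1 - p)) -
          4 * n * ε ^ 3 / (p ^ 2 * (1 - p) ^ 2)) with hE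
  set c := 2 * √(2 * π) / (exp 1 ^ 2 * s) with hc
  have hc0 : 0 < c := by positivity
  have key : ∀ i : ℕ, t - s < i → (i : ℝ) ≤ t →
      c * E ≤ n.choose i * p ^ i * (1 - p) ^ (n - i) := by
    intro i hi1 hi2
    have hi : 1 ≤ i := by
      have : (0 : ℝ) < i := by linarith
      exact_mod_cast this
    have hin : i < n := by
      have : (i : ℝ) < n := by rw [ht_def] at hi2; nlinarith
      exact_mod_cast this
    set h := p - i / n with hh
    have hih : (i : ℝ) = (p - h) * n := by rw [hh]; field_simp; ring
    have hεh : ε ≤ h := by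
      rw [hih, ht_def] at hi2
      linarith [le_of_mul_le_mul_right hi2 hn']
    have hhs : s * h ≤ s * ε + 1 := by
      rw [hih, ht_def] at hi1
      have : s * (s * h) ≤ s * (s * ε + 1) := by
        calc s * (s * h) = n * h := by rw [← hss]; ring
          _ ≤ n * ε + s := by linarith
          _ = s * (s * ε + 1) := by rw [← hss]; ring
      exact le_of_mul_le_mul_left this hs
    have hh0 : 0 ≤ h := hε.le.trans hεh
    have hh2 : h ≤ 2 * ε := le_of_mul_le_mul_left (by linarith : s * h ≤ s * (2 * ε)) hs
    refine le_trans ?_ (binomial_prob_lower_bound hp0 hp1 hi hin hh0 hih)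
    have hquad : n * h ^ 2 ≤ n * ε ^ 2 + 3 * (s * ε) := by
      have h1 : (s * h) ^ 2 ≤ (s * ε + 1) ^ 2 := by gcongr
      rw [← hss]; nlinarith
    have hcub : h ^ 3 / (2 * p ^ 2) ≤ 4 * ε ^ 3 / (p ^ 2 * (1 - p) ^ 2) := by
      calc h ^ 3 / (2 * p ^ 2) ≤ (2 * ε) ^ 3 / (2 * p ^ 2) := by gcongr
        _ = 4 * ε ^ 3 / (p ^ 2 * 1) := by field_simp; ring
        _ ≤ _ := by
          gcongr
          exact pow_le_one₀ hq.le (by linarith)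
    have hquad' := div_le_div_of_nonneg_right hquad (by positivity : 0 ≤ 2 * p * (1 - p))
    have hcub' := mul_le_mul_of_nonneg_left hcub hn'.le
    rw [hE]
    gcongr
    have e1 : 4 * n * ε ^ 3 / (p ^ 2 * (1 - p) ^ 2) =
      n * (4 * ε ^ 3 / (p ^ 2 * (1 - p) ^ 2)) := by ring
    have e2 : n * (h ^ 2 / (2 * p * (1 - p))) = n * h ^ 2 / (2 * p * (1 - p)) := by ring
    rw [e1, mul_add, e2, neg_div]
    rw [add_div] at hquad'
    linarith
  set m := ⌊s⌋₊ with hm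
  set k := ⌊t⌋₊ with hk
  have ht0 : 0 ≤ t := hs.le.trans hts
  have hmk : m ≤ k := Nat.floor_mono hts
  have hms : (m : ℝ) ≤ s := Nat.floor_le hs.le
  have hms' : s < m + 1 := Nat.lt_floor_add_one s
  have hkt : (k : ℝ) ≤ t := Nat.floor_le ht0
  have hkt' : t < k + 1 := Nat.lt_floor_add_one t
  have hkn : k ≤ n := by
    have : (k : ℝ) ≤ n := hkt.trans (by rw [ht_def]; nlinarith)
    exact_mod_cast this
  have hconst : 1 / (2 * √2) ≤ m * c := by
    have hm23 : 2 / 3 * s ≤ m := by linarith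
    calc 1 / (2 * √2) ≤ 2 / 3 * (2 * (√2 * √π) / exp 1 ^ 2) := inv_two_mul_sqrt_two_le
      _ = 2 / 3 * s * c := by
          rw [hc, sqrt_mul (by norm_num)]; field_simp
      _ ≤ m * c := by gcongr
  have hnn : ∀ i : ℕ, 0 ≤ (if (i : ℝ) ≤ t then
      (n.choose i : ℝ) * p ^ i * (1 - p) ^ (n - i) else 0) := by
    intro i
    split_ifs <;> positivity
  calc 1 / (2 * √2) * E ≤ m * c * E := by gcongr
    _ = ∑ i ∈ Finset.Ioc (k - m) k, c * E := by
        rw [Finset.sum_const, Nat.card_Ioc, nsmul_eq_mul, Nat.sub_sub_self hmk]; ring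
    _ ≤ ∑ i ∈ Finset.Ioc (k - m) k, if (i : ℝ) ≤ t then
          (n.choose i : ℝ) * p ^ i * (1 - p) ^ (n - i) else 0 := by
        refine Finset.sum_le_sum fun i hi => ?_
        rw [Finset.mem_Ioc] at hi
        have hik : (i : ℝ) ≤ k := by exact_mod_cast hi.2
        have hik' : (k : ℝ) + 1 ≤ i + m := by exact_mod_cast (by omega : k + 1 ≤ i + m)
        rw [if_pos (hik.trans hkt)]
        exact key i (by linarith) (hik.trans hkt)
    _ ≤ binomialLowerTail n p t := by
        refine Finset.sum_le_sum_of_subset_of_nonneg ?_ fun i _ _ => hnn i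
        intro i hi
        rw [Finset.mem_Ioc] at hi
        rw [Finset.mem_range]
        omega
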